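/- arXiv:1907.08084 — 3 statements merged into one kernel-verified Lean document; each statement's English description precedes it below -/
import Mathlib

section
/- For every even positive integer n, the 4-graph H(n) is F_4(6,3)-free; that is, there do not exist three distinct edges of H(n) whose union contains at most 6 vertices. -/
/-- An `r`-graph (set of edges) is `F_r(v,e)`-free if there do not exist `e` distinct
edges whose union contains at most `v` vertices. -/
def FrFree {V : Type*} [DecidableEq V] (H : Finset (Finset V)) (v e : ℕ) : Prop :=
  ¬ ∃ S ⊆ H, S.card = e ∧ (S.biUnion id).card ≤ v

/-- `H(n)`: the 4-graph on `ℤ/nℤ` whose edges are the 4-element subsets with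
element-sum equal to `1`. -/
def Hgraph (n : ℕ) [NeZero n] : Finset (Finset (ZMod n)) :=
  Finset.univ.filter (fun A => A.card = 4 ∧ A.sum id = 1)

/-!
Distinct edges with the same sum differ in at least two vertices, since an edge is determined by its
sum and all but one of its vertices; so two edges of `H(n)` share at most two vertices. If three
edges `A`, `B`, `C` span at most six vertices, inclusion–exclusion then forces `C = A ∆ B`. Counting
each vertex with multiplicity, the sums of `A` and `B` add up to the sum of `A ∆ B` plus twice the
sum `s` of `A ∩ B`, that is `1 + 1 = 1 + 2 * s`. Hence `1` is even in `ℤ/nℤ`, which is impossible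
when `n` is even.
-/

section

open Finset
open scoped symmDiff

theorem one_lt_card_sdiff_of_sum_eq {M : Type*} [AddCancelCommMonoid M] [DecidableEq M]
    {A B : Finset M} (hne : A ≠ B) (hcard : #A = #B) (hsum : ∑ x ∈ A, x = ∑ x ∈ B, x) :
    1 < #(A \ B) := by
  by_contra! hle
  have hcard' : #(A \ B) = #(B \ A) := card_sdiff_eq_card_sdiff_iff.mpr hcard
  have hsum' : ∑ x ∈ A \ B, x = ∑ x ∈ B \ A, x := sum_sdiff_eq_sum_sdiff_iff.mpr hsum
  have hpos : 0 < #(A \ B) :=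
    card_pos.mpr (sdiff_nonempty.mpr fun hAB ↦ hne (eq_of_subset_of_card_le hAB hcard.ge))
  obtain ⟨a, ha⟩ := card_eq_one.mp (show #(A \ B) = 1 by lia)
  obtain ⟨b, hb⟩ := card_eq_one.mp (show #(B \ A) = 1 by lia)
  have hab : a = b := by simpa only [ha, hb, sum_singleton] using hsum'
  have haA : a ∈ A \ B := ha ▸ mem_singleton_self a
  have hbB : b ∈ B \ A := hb ▸ mem_singleton_self b
  exact (mem_sdiff.mp haA).2 (hab ▸ (mem_sdiff.mp hbB).1)

theorem eq_symmDiff_of_card_union_le {α : Type*} [DecidableEq α] {A B C : Finset α} {k : ℕ}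
    (hA : #A = 2 * k) (hB : #B = 2 * k) (hC : #C = 2 * k)
    (hAB : #(A ∩ B) ≤ k) (hAC : #(A ∩ C) ≤ k) (hBC : #(B ∩ C) ≤ k)
    (hunion : #(A ∪ B ∪ C) ≤ 3 * k) : C = A ∆ B := by
  have hcardAB : #(A ∪ B) + #(A ∩ B) = #A + #B := card_union_add_card_inter A B
  have hspan : A ∪ B = A ∪ B ∪ C := eq_of_subset_of_card_le subset_union_left (by lia)
  have hCsub : C ⊆ A ∪ B := hspan ▸ subset_union_right
  have hcover : A ∩ C ∪ B ∩ C = C := by rw [← union_inter_distrib_right, inter_eq_right.mpr hCsub]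
  have hcardC : #(A ∩ C ∪ B ∩ C) + #((A ∩ C) ∩ (B ∩ C)) = #(A ∩ C) + #(B ∩ C) :=
    card_union_add_card_inter _ _
  rw [hcover, ← inter_inter_distrib_right] at hcardC
  have hdisj : Disjoint C (A ∩ B) := by
    rw [disjoint_comm, disjoint_iff_inter_eq_empty, ← card_eq_zero]
    lia
  have hcardSdiff : #((A ∪ B) \ (A ∩ B)) + #(A ∩ B) = #(A ∪ B) :=
    card_sdiff_add_card_eq_card (inter_subset_left.trans subset_union_left)
  rw [symmDiff_eq_sup_sdiff_inf, sup_eq_union, inf_eq_inter]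
  exact eq_of_subset_of_card_le (subset_sdiff.mpr ⟨hCsub, hdisj⟩) (by lia)

theorem sum_symmDiff_add_two_nsmul_sum_inter {ι M : Type*} [AddCommMonoid M] [DecidableEq ι]
    (A B : Finset ι) (f : ι → M) :
    ∑ i ∈ A ∆ B, f i + 2 • ∑ i ∈ A ∩ B, f i = ∑ i ∈ A, f i + ∑ i ∈ B, f i := by
  have hsdiff : ∑ i ∈ A ∆ B, f i + ∑ i ∈ A ∩ B, f i = ∑ i ∈ A ∪ B, f i := by
    rw [symmDiff_eq_sup_sdiff_inf]
    exact sum_sdiff (inter_subset_left.trans subset_union_left)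
  rw [two_nsmul, ← add_assoc, hsdiff, sum_union_inter]

theorem not_even_one_zmod {n : ℕ} (hn : Even n) : ¬ Even (1 : ZMod n) := by
  intro hone
  have hone₂ : Even (1 : ZMod 2) := by
    simpa only [map_one] using hone.map (ZMod.castHom hn.two_dvd (ZMod 2))
  obtain ⟨s, hs⟩ := hone₂
  exact one_ne_zero (hs.trans (CharTwo.add_self_eq_zero s))

theorem stmt_3_general {M : Type*} [AddCancelCommMonoid M] [DecidableEq M] {c : M}
    (hc : ¬ Even c) {H : Finset (Finset M)} (hH : ∀ A ∈ H, #A = 4 ∧ ∑ x ∈ A, x = c) :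
    FrFree H 6 3 := by
  rintro ⟨S, hS, hcard, hunion⟩
  obtain ⟨A, B, C, hAB, hAC, hBC, rfl⟩ := card_eq_three.mp hcard
  have hAH : A ∈ H := hS (by simp)
  have hBH : B ∈ H := hS (by simp)
  have hCH : C ∈ H := hS (by simp)
  have hinter {E F : Finset M} (hE : E ∈ H) (hF : F ∈ H) (hEF : E ≠ F) : #(E ∩ F) ≤ 2 := by
    have hsdiff : 1 < #(E \ F) := one_lt_card_sdiff_of_sum_eq hEF
      ((hH E hE).1.trans (hH F hF).1.symm) ((hH E hE).2.trans (hH F hF).2.symm)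
    have hsplit : #(E \ F) + #(E ∩ F) = #E := card_sdiff_add_card_inter E F
    have hcardE : #E = 4 := (hH E hE).1
    lia
  have hspan : #(A ∪ B ∪ C) ≤ 6 := by
    simpa only [biUnion_insert, singleton_biUnion, id, union_assoc] using hunion
  have hCeq : C = A ∆ B :=
    eq_symmDiff_of_card_union_le (k := 2) (hH A hAH).1 (hH B hBH).1 (hH C hCH).1
      (hinter hAH hBH hAB) (hinter hAH hCH hAC) (hinter hBH hCH hBC) hspan
  have hdouble : c + 2 • ∑ x ∈ A ∩ B, x = c + c := by
    simpa only [← hCeq, (hH _ hAH).2, (hH _ hBH).2, (hH _ hCH).2]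
      using sum_symmDiff_add_two_nsmul_sum_inter A B fun x ↦ x
  exact hc ((even_iff_exists_two_nsmul c).mpr ⟨_, (add_left_cancel hdouble).symm⟩)

end

/-- For every even positive integer `n`, the 4-graph `H(n)` is `F₄(6,3)`-free: there do
not exist three distinct edges of `H(n)` whose union contains at most 6 vertices. -/
theorem stmt_3 (n : ℕ) [NeZero n] (heven : Even n) :
    FrFree (Hgraph n) 6 3 :=
  stmt_3_general (not_even_one_zmod heven) fun _ hA ↦ (Finset.mem_filter.mp hA).2
end

section
/- For every integer r > 4 and every positive integer d, in the r-graph H_d every (r−1)-element subset of (ℤ/2ℤ)^d is contained in at most one edge; in particular H_d is F_r(r+1,2)-free. -/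
/-- `H_d`: the `r`-graph on vertex set `(ℤ/2ℤ)^d` whose edges are the `r`-element
zero-sum subsets containing no zero-sum subset of size `4` and none of size `r − 4`. -/
def Hd (r d : ℕ) : Finset (Finset (Fin d → ZMod 2)) :=
  Finset.univ.filter (fun A => A.card = r ∧ A.sum id = 0 ∧
    ∀ B ∈ A.powerset, (B.card = 4 ∨ B.card = r - 4) → B.sum id ≠ 0)

lemma eq_of_sum_id_eq_of_subset {M : Type*} [AddCancelCommMonoid M]
    {A B T : Finset M} (hTA : T ⊆ A) (hTB : T ⊆ B) (hA : T.card + 1 = A.card)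
    (hB : T.card + 1 = B.card) (hsum : A.sum id = B.sum id) : A = B := by
  classical
  obtain ⟨a, ha, rfl⟩ := Finset.exists_eq_insert_iff.2 ⟨hTA, hA⟩
  obtain ⟨b, hb, rfl⟩ := Finset.exists_eq_insert_iff.2 ⟨hTB, hB⟩
  rw [Finset.sum_insert ha, Finset.sum_insert hb, add_left_inj] at hsum
  exact congrArg (insert · T) hsum

lemma card_filter_subset_le_one_of_sum_id_eq {M : Type*} [AddCancelCommMonoid M] [DecidableEq M]
    {H : Finset (Finset M)} {r : ℕ} {s : M} (hH : (H : Set (Finset M)).Sized r)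
    (hsum : ∀ A ∈ H, A.sum id = s) {T : Finset M} (hT : T.card + 1 = r) :
    (H.filter (fun A => T ⊆ A)).card ≤ 1 := by
  refine Finset.card_le_one.2 fun A hA B hB => ?_
  obtain ⟨hA, hTA⟩ := Finset.mem_filter.1 hA
  obtain ⟨hB, hTB⟩ := Finset.mem_filter.1 hB
  exact eq_of_sum_id_eq_of_subset hTA hTB (hT.trans (hH hA).symm) (hT.trans (hH hB).symm)
    ((hsum A hA).trans (hsum B hB).symm)

lemma frFree_two_of_card_filter_subset_le_one {V : Type*} [DecidableEq V]
    {H : Finset (Finset V)} {r t v : ℕ} (hH : (H : Set (Finset V)).Sized r)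
    (hone : ∀ T : Finset V, T.card = t → (H.filter (fun A => T ⊆ A)).card ≤ 1)
    (hv : v + t ≤ 2 * r) : FrFree H v 2 := by
  rintro ⟨S, hSH, hS, hSv⟩
  obtain ⟨A, B, hAB, rfl⟩ := Finset.card_eq_two.1 hS
  obtain ⟨hA, hB⟩ : A ∈ H ∧ B ∈ H := by
    rwa [Finset.insert_subset_iff, Finset.singleton_subset_iff] at hSH
  have hunion : (A ∪ B).card ≤ v := by
    rwa [Finset.biUnion_insert, Finset.singleton_biUnion, id, id] at hSv
  have hinter : t ≤ (A ∩ B).card := by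
    have := Finset.card_union_add_card_inter A B
    have := hH hA
    have := hH hB
    omega
  obtain ⟨T, hTAB, hT⟩ := Finset.exists_subset_card_eq hinter
  obtain ⟨hTA, hTB⟩ := Finset.subset_inter_iff.1 hTAB
  exact hAB (Finset.card_le_one.1 (hone T hT) A (Finset.mem_filter.2 ⟨hA, hTA⟩)
    B (Finset.mem_filter.2 ⟨hB, hTB⟩))

lemma Hd_sized (r d : ℕ) : (Hd r d : Set (Finset (Fin d → ZMod 2))).Sized r :=
  fun _ hA => (Finset.mem_filter.1 hA).2.1

lemma sum_id_eq_zero_of_mem_Hd {r d : ℕ} {A : Finset (Fin d → ZMod 2)} (hA : A ∈ Hd r d) :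
    A.sum id = 0 :=
  (Finset.mem_filter.1 hA).2.2.1

theorem stmt_8_general {M : Type*} [AddCancelCommMonoid M] [DecidableEq M]
    {H : Finset (Finset M)} {r : ℕ} {s : M} (hr : 0 < r)
    (hH : (H : Set (Finset M)).Sized r) (hsum : ∀ A ∈ H, A.sum id = s) :
    (∀ T : Finset M, T.card = r - 1 → (H.filter (fun A => T ⊆ A)).card ≤ 1) ∧
    FrFree H (r + 1) 2 := by
  have hone (T : Finset M) (hT : T.card = r - 1) : (H.filter (fun A => T ⊆ A)).card ≤ 1 :=
    card_filter_subset_le_one_of_sum_id_eq hH hsum (by omega)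
  exact ⟨hone, frFree_two_of_card_filter_subset_le_one hH hone (by omega)⟩

/-- For every integer `r > 4` and every positive integer `d`, in the `r`-graph `H_d`
every `(r−1)`-element subset of `(ℤ/2ℤ)^d` is contained in at most one edge; in
particular `H_d` is `F_r(r+1,2)`-free. -/
theorem stmt_8 (r d : ℕ) (hr : 4 < r) (hd : 0 < d) :
    (∀ T : Finset (Fin d → ZMod 2), T.card = r - 1 →
      ((Hd r d).filter (fun A => T ⊆ A)).card ≤ 1) ∧
    FrFree (Hd r d) (r + 1) 2 :=
  stmt_8_general (by omega) (Hd_sized r d) fun _ => sum_id_eq_zero_of_mem_Hd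
end

section
/- For every integer r > 4 there exists a constant C > 0 such that for all positive integers m and d, setting n = m·2^d, there exists an r-graph on n vertices which is F_r(r+1,2)-free and F_r(r+2,3)-free and has at least (1/r − C/2^d)·C(n,r−1) edges. -/
open Finset

section FrFree

variable {V : Type*} [DecidableEq V] {H : Finset (Finset V)} {v : ℕ}

lemma frFree_two_iff : FrFree H v 2 ↔ ∀ A ∈ H, ∀ B ∈ H, A ≠ B → v < #(A ∪ B) := by
  constructor
  · intro h A hA B hB hAB
    by_contra! hv
    exact h ⟨{A, B}, by grind, card_pair hAB, by simpa using hv⟩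
  · rintro h ⟨S, hS, hcard, hv⟩
    obtain ⟨A, B, hAB, rfl⟩ := card_eq_two.1 hcard
    exact (h A (hS (by simp)) B (hS (by simp)) hAB).not_ge (by simpa using hv)

lemma frFree_three_iff : FrFree H v 3 ↔ ∀ A ∈ H, ∀ B ∈ H, ∀ D ∈ H,
    A ≠ B → A ≠ D → B ≠ D → v < #(A ∪ (B ∪ D)) := by
  constructor
  · intro h A hA B hB D hD hAB hAD hBD
    by_contra! hv
    exact h ⟨{A, B, D}, by grind, card_eq_three.2 ⟨A, B, D, hAB, hAD, hBD, rfl⟩, by simpa using hv⟩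
  · rintro h ⟨S, hS, hcard, hv⟩
    obtain ⟨A, B, D, hAB, hAD, hBD, rfl⟩ := card_eq_three.1 hcard
    exact (h A (hS (by simp)) B (hS (by simp)) D (hS (by simp)) hAB hAD hBD).not_ge
      (by simpa using hv)

end FrFree

section Sums

lemma card_add_two_le_card_union_of_sum_eq {M : Type*} [AddCancelCommMonoid M] [DecidableEq M]
    {A B : Finset M} (hcard : #A = #B) (hsum : ∑ x ∈ A, x = ∑ x ∈ B, x) (hne : A ≠ B) :
    #A + 2 ≤ #(A ∪ B) := by
  have hunion : #(B \ A) + #A = #(A ∪ B) := by rw [card_sdiff_add_card, union_comm]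
  have hcomm : #(A \ B) = #(B \ A) := card_sdiff_comm hcard
  have hpos : #(B \ A) ≠ 0 := fun h =>
    hne (eq_of_subset_of_card_le (sdiff_eq_empty_iff_subset.1 (card_eq_zero.1 h)) hcard.le).symm
  have hone : #(B \ A) ≠ 1 := by
    intro h
    obtain ⟨a, ha⟩ := card_eq_one.1 (hcomm.trans h)
    obtain ⟨b, hb⟩ := card_eq_one.1 h
    have hab : a = b := by
      simpa only [ha, hb, sum_singleton] using sum_sdiff_eq_sum_sdiff_iff.2 hsum
    have hdisj : Disjoint (A \ B) (B \ A) := disjoint_sdiff_sdiff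
    rw [ha, hb, hab, disjoint_self_iff_empty] at hdisj
    exact singleton_ne_empty b hdisj
  lia

lemma sum_sdiff_union_sdiff {V : Type*} [AddCommMonoid V] [DecidableEq V] {A B D : Finset V}
    (hA : A ⊆ B ∪ D) (hunion : A ∪ B = A ∪ D) (hB : ∑ x ∈ B, x = 0) (hD : ∑ x ∈ D, x = 0) :
    ∑ x ∈ A \ B ∪ A \ D, x = ∑ x ∈ A ∪ B, x + ∑ x ∈ A ∪ B, x := by
  have hdisj : Disjoint (A \ B) (A \ D) := disjoint_left.2 (by grind)
  have hsum : ∀ E : Finset V, ∑ x ∈ E, x = 0 → ∑ x ∈ A \ E, x = ∑ x ∈ A ∪ E, x := by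
    intro E hE
    rw [← union_sdiff_right, ← sum_sdiff (subset_union_right (s₁ := A) (s₂ := E)), hE, add_zero]
  rw [sum_union hdisj, hsum B hB, hsum D hD, ← hunion]

lemma exists_sum_eq_and_sum_eq {ι V : Type*} [AddCommGroup V] {s t : Finset ι}
    (hts : t ⊂ s) (ht : t.Nonempty) (v w : V) :
    ∃ g : ι → V, ∑ i ∈ s, g i = v ∧ ∑ i ∈ t, g i = w := by
  classical
  obtain ⟨j, hj⟩ := ht
  obtain ⟨i, his, hit⟩ := exists_of_ssubset hts
  refine ⟨Pi.single j w + Pi.single i (v - w), ?_, ?_⟩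
  · simp [sum_add_distrib, hts.subset hj, his]
  · simp [sum_add_distrib, hj, hit]

end Sums

section IsMinimalZeroSum

variable {ι V Z : Type*} [AddCommGroup V] [AddCommGroup Z]

/-- The family `f` sums to zero over `s`, and no nonempty proper subfamily has its sum in `ker π`.
For `π = id` these are the minimal zero-sum sequences of additive combinatorics. -/
def IsMinimalZeroSum (π : V →+ Z) (s : Finset ι) (f : ι → V) : Prop :=
  ∑ i ∈ s, f i = 0 ∧ ∀ t ⊂ s, t.Nonempty → π (∑ i ∈ t, f i) ≠ 0

noncomputable instance (π : V →+ Z) (s : Finset ι) (f : ι → V) :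
    Decidable (IsMinimalZeroSum π s f) :=
  Classical.dec _

lemma IsMinimalZeroSum.injOn {π : V →+ Z} (hZ : ∀ z : Z, z + z = 0) {s : Finset ι} {f : ι → V}
    (hf : IsMinimalZeroSum π s f) (hs : 3 ≤ #s) : Set.InjOn f s := by
  classical
  intro i hi j hj hij
  by_contra hne
  have hpair : {i, j} ⊂ s := by
    refine (insert_subset hi (singleton_subset_iff.2 hj)).ssubset_of_ne fun h => ?_
    rw [← h, card_pair hne] at hs
    lia
  refine hf.2 {i, j} hpair (insert_nonempty i {j}) ?_
  rw [sum_pair hne, hij, map_add, hZ]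

lemma IsMinimalZeroSum.image [DecidableEq V] {π : V →+ Z} {s : Finset ι} {f : ι → V}
    (hf : IsMinimalZeroSum π s f) (hinj : Set.InjOn f s) :
    IsMinimalZeroSum π (s.image f) id := by
  refine ⟨(sum_image hinj).trans hf.1, fun t ht hne => ?_⟩
  obtain ⟨u, hu, rfl⟩ := subset_image_iff.1 ht.subset
  rw [sum_image (hinj.mono hu)]
  exact hf.2 u (hu.ssubset_of_ne fun h => ht.ne (congrArg _ h)) hne.of_image

end IsMinimalZeroSum

section Counting

lemma card_filter_eq_zero_mul_card {X Y : Type*} [AddGroup X] [AddGroup Y] [Fintype X]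
    [Fintype Y] [DecidableEq Y] {φ : X →+ Y} (hφ : Function.Surjective φ) :
    #{x | φ x = 0} * Fintype.card Y = Fintype.card X := by
  have hker : #{x | φ x = 0} = Nat.card φ.ker := by
    rw [← Fintype.card_subtype, ← Nat.card_eq_fintype_card]
    rfl
  have hindex : φ.ker.index = Fintype.card Y := by
    rw [AddSubgroup.index_ker, AddMonoidHom.range_eq_top.2 hφ, AddSubgroup.card_top,
      Nat.card_eq_fintype_card]
  rw [hker, ← hindex, AddSubgroup.card_mul_index, Nat.card_eq_fintype_card]

lemma card_filter_image_eq_le {ι α : Type*} [Fintype ι] [DecidableEq ι] [Fintype α]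
    [DecidableEq α] {A : Finset α} (hA : #A = Fintype.card ι) :
    #{g : ι → α | univ.image g = A} ≤ (Fintype.card ι).factorial := by
  have hemb : #(univ : Finset (ι ↪ A)) = (Fintype.card ι).factorial := by
    rw [card_univ, Fintype.card_embedding_eq, Fintype.card_coe, hA, Nat.descFactorial_self]
  rw [← hemb]
  refine card_le_card_of_surjOn (fun e i => (e i : α)) fun g hg => ?_
  obtain rfl : univ.image g = A := by simpa using hg
  have hinj : Function.Injective g := by
    rw [← Set.injOn_univ, ← coe_univ, ← card_image_iff, hA, card_univ]
  exact ⟨⟨fun i => ⟨g i, mem_image_of_mem g (mem_univ i)⟩,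
    fun i j h => hinj (congrArg Subtype.val h)⟩, by simp, rfl⟩

/-- The homomorphism taking a tuple to the sum of its entries over the index set `t`. -/
def sumHom {ι : Type*} (V : Type*) [AddCommMonoid V] (t : Finset ι) : (ι → V) →+ V :=
  ∑ i ∈ t, Pi.evalAddMonoidHom (fun _ => V) i

@[simp]
lemma sumHom_apply {ι V : Type*} [AddCommMonoid V] (t : Finset ι) (g : ι → V) :
    sumHom V t g = ∑ i ∈ t, g i := by
  simp [sumHom]

variable {ι V Z : Type*} [AddCommGroup V] [AddCommGroup Z] [Fintype ι] [DecidableEq ι]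
  [Fintype V]

lemma card_filter_sum_eq_zero [DecidableEq V] [Nonempty ι] :
    #{g : ι → V | ∑ i, g i = 0} = Fintype.card V ^ (Fintype.card ι - 1) := by
  have hsurj : Function.Surjective (sumHom V (univ : Finset ι)) := fun v =>
    ⟨Pi.single (Classical.arbitrary ι) v, by simp⟩
  have h := card_filter_eq_zero_mul_card hsurj
  simp only [sumHom_apply, Fintype.card_fun] at h
  refine Nat.eq_of_mul_eq_mul_right (Fintype.card_pos (α := V)) ?_
  rw [h, pow_sub_one_mul Fintype.card_ne_zero]

variable [Fintype Z] {π : V →+ Z}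

lemma card_filter_sum_eq_zero_and_map_sum_eq_zero [DecidableEq V] [DecidableEq Z]
    (hπ : Function.Surjective π) {t : Finset ι} (htu : t ⊂ univ) (ht : t.Nonempty) :
    #{g : ι → V | ∑ i, g i = 0 ∧ π (∑ i ∈ t, g i) = 0} * Fintype.card Z =
      Fintype.card V ^ (Fintype.card ι - 1) := by
  have : Nonempty ι := ht.to_type
  have hsurj : Function.Surjective ((sumHom V univ).prod (π.comp (sumHom V t))) := by
    rintro ⟨v, z⟩
    obtain ⟨w, rfl⟩ := hπ z
    obtain ⟨g, hv, hw⟩ := exists_sum_eq_and_sum_eq htu ht v w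
    exact ⟨g, by simp [hv, hw]⟩
  have h := card_filter_eq_zero_mul_card hsurj
  simp only [AddMonoidHom.prod_apply, AddMonoidHom.comp_apply, sumHom_apply, Prod.mk_eq_zero,
    Fintype.card_prod, Fintype.card_fun] at h
  refine Nat.eq_of_mul_eq_mul_right (Fintype.card_pos (α := V)) ?_
  rw [pow_sub_one_mul Fintype.card_ne_zero, ← h, mul_assoc, mul_comm (Fintype.card Z)]

lemma card_pow_mul_card_le [Nonempty ι] (hπ : Function.Surjective π) :
    Fintype.card V ^ (Fintype.card ι - 1) * Fintype.card Z ≤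
      #{g : ι → V | IsMinimalZeroSum π univ g} * Fintype.card Z +
        2 ^ Fintype.card ι * Fintype.card V ^ (Fintype.card ι - 1) := by
  classical
  let bad (t : Finset ι) : Finset (ι → V) := {g | ∑ i, g i = 0 ∧ π (∑ i ∈ t, g i) = 0}
  let T : Finset (Finset ι) := {t | t ⊂ univ ∧ t.Nonempty}
  let zeroSum : Finset (ι → V) := {g | ∑ i, g i = 0}
  have hcover : zeroSum ⊆ ({g | IsMinimalZeroSum π univ g} : Finset (ι → V)) ∪ T.biUnion bad := by
    intro g hg
    simp only [IsMinimalZeroSum, T, bad, zeroSum, mem_union, mem_biUnion, mem_filter_univ] at hg ⊢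
    grind
  have hunion := (card_le_card hcover).trans
    ((card_union_le _ _).trans (Nat.add_le_add_left card_biUnion_le _))
  have hbad : ∀ t ∈ T, #(bad t) * Fintype.card Z = Fintype.card V ^ (Fintype.card ι - 1) := by
    intro t ht
    obtain ⟨htu, hne⟩ := (mem_filter_univ t).1 ht
    exact card_filter_sum_eq_zero_and_map_sum_eq_zero hπ htu hne
  have hT : #T ≤ 2 ^ Fintype.card ι := (card_le_univ T).trans_eq Fintype.card_finset
  have hzeroSum : #zeroSum = Fintype.card V ^ (Fintype.card ι - 1) := card_filter_sum_eq_zero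
  rw [hzeroSum] at hunion
  calc Fintype.card V ^ (Fintype.card ι - 1) * Fintype.card Z
      ≤ (#{g : ι → V | IsMinimalZeroSum π univ g} + ∑ t ∈ T, #(bad t)) * Fintype.card Z := by
        gcongr
    _ = #{g : ι → V | IsMinimalZeroSum π univ g} * Fintype.card Z +
          #T * Fintype.card V ^ (Fintype.card ι - 1) := by
        rw [add_mul, sum_mul, sum_congr rfl hbad, sum_const, smul_eq_mul]
    _ ≤ _ := by gcongr

end Counting

section ZeroSumGraph

variable {V Z : Type*} [AddCommGroup V] [AddCommGroup Z] [Fintype V] {π : V →+ Z} {r : ℕ}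

/-- The `r`-graph whose edges are the zero-sum `r`-subsets of `V` with no nonempty proper subset
summing into `ker π`. -/
noncomputable def zeroSumGraph (π : V →+ Z) (r : ℕ) : Finset (Finset V) :=
  {A | #A = r ∧ IsMinimalZeroSum π A id}

lemma mem_zeroSumGraph {A : Finset V} :
    A ∈ zeroSumGraph π r ↔ #A = r ∧ IsMinimalZeroSum π A id :=
  mem_filter_univ A

lemma card_isMinimalZeroSum_le (hZ : ∀ z : Z, z + z = 0) (hr : 3 ≤ r) :
    #{g : Fin r → V | IsMinimalZeroSum π univ g} ≤ r.factorial * #(zeroSumGraph π r) := by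
  have hinj : ∀ g : Fin r → V, IsMinimalZeroSum π univ g →
      Set.InjOn g (univ : Finset (Fin r)) := fun g hg => hg.injOn hZ (by simpa using hr)
  classical
  refine card_le_mul_card_image_of_maps_to (f := fun g => univ.image g) (fun g hg => ?_) _
    fun A hA => ?_
  · have hg := (mem_filter_univ g).1 hg
    exact mem_zeroSumGraph.2 ⟨by rw [card_image_of_injOn (hinj g hg), card_fin],
      hg.image (hinj g hg)⟩
  · have hle := card_filter_image_eq_le (ι := Fin r) (A := A)
      (by rw [(mem_zeroSumGraph.1 hA).1, Fintype.card_fin])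
    rw [Fintype.card_fin] at hle
    exact (card_le_card (filter_subset_filter _ (filter_subset _ _))).trans hle

lemma mul_card_pow_le_card_zeroSumGraph [Fintype Z] (hZ : ∀ z : Z, z + z = 0)
    (hπ : Function.Surjective π) (hr : 3 ≤ r) :
    (1 - 2 ^ r / Fintype.card Z : ℝ) * (Fintype.card V : ℝ) ^ (r - 1) ≤
      r.factorial * #(zeroSumGraph π r) := by
  have : Nonempty (Fin r) := ⟨⟨0, by lia⟩⟩
  have hq : (0 : ℝ) < Fintype.card Z := by exact_mod_cast Fintype.card_pos
  have hcount := card_pow_mul_card_le (ι := Fin r) hπ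
  rw [Fintype.card_fin] at hcount
  have hcount' : (Fintype.card V : ℝ) ^ (r - 1) * Fintype.card Z ≤
      r.factorial * #(zeroSumGraph π r) * Fintype.card Z +
        2 ^ r * (Fintype.card V : ℝ) ^ (r - 1) := by
    exact_mod_cast hcount.trans (by gcongr; exact card_isMinimalZeroSum_le hZ hr)
  rw [one_sub_div hq.ne', div_mul_eq_mul_div, div_le_iff₀ hq]
  linarith

variable [DecidableEq V]

lemma add_two_le_card_union_of_mem_zeroSumGraph {A B : Finset V} (hA : A ∈ zeroSumGraph π r)
    (hB : B ∈ zeroSumGraph π r) (hAB : A ≠ B) : r + 2 ≤ #(A ∪ B) := by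
  obtain ⟨rfl, hA0, -⟩ := mem_zeroSumGraph.1 hA
  obtain ⟨hcard, hB0, -⟩ := mem_zeroSumGraph.1 hB
  exact card_add_two_le_card_union_of_sum_eq hcard.symm (hA0.trans hB0.symm) hAB

lemma frFree_two_zeroSumGraph : FrFree (zeroSumGraph π r) (r + 1) 2 :=
  frFree_two_iff.2 fun _ hA _ hB => add_two_le_card_union_of_mem_zeroSumGraph hA hB

lemma frFree_three_zeroSumGraph (hZ : ∀ z : Z, z + z = 0) (hr : r ≠ 4) :
    FrFree (zeroSumGraph π r) (r + 2) 3 := by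
  refine frFree_three_iff.2 fun A hA B hB D hD hAB hAD hBD => ?_
  by_contra! hW
  have hcover : ∀ {E F}, E ∈ zeroSumGraph π r → F ∈ zeroSumGraph π r → E ≠ F →
      E ∪ F ⊆ A ∪ (B ∪ D) → E ∪ F = A ∪ (B ∪ D) := fun hE hF hEF hsub =>
    eq_of_subset_of_card_le hsub (hW.trans (add_two_le_card_union_of_mem_zeroSumGraph hE hF hEF))
  have hABW := hcover hA hB hAB (by grind)
  have hADW := hcover hA hD hAD (by grind)
  have hBDW := hcover hB hD hBD (by grind)
  have hAsub : A ⊆ B ∪ D := hBDW ▸ subset_union_left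
  have hWcard := add_two_le_card_union_of_mem_zeroSumGraph hA hB hAB
  obtain ⟨hAr, -, hAmin⟩ := mem_zeroSumGraph.1 hA
  obtain ⟨hBr, hB0, -⟩ := mem_zeroSumGraph.1 hB
  obtain ⟨hDr, hD0, -⟩ := mem_zeroSumGraph.1 hD
  have hABcard : #(A \ B) = 2 := by grind [card_sdiff_add_card A B]
  have hADcard : #(A \ D) = 2 := by grind [card_sdiff_add_card A D]
  have hcard : #(A \ B ∪ A \ D) = 4 := by
    rw [card_union_of_disjoint (disjoint_left.2 (by grind)), hABcard, hADcard]
  refine hAmin (A \ B ∪ A \ D) ?_ (card_pos.1 (by lia)) ?_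
  · exact (union_subset sdiff_subset sdiff_subset).ssubset_of_ne fun h =>
      hr (by rw [← hAr, ← h, hcard])
  · simp only [id, sum_sdiff_union_sdiff hAsub (hABW.trans hADW.symm) hB0 hD0, map_add, hZ]

end ZeroSumGraph

lemma div_mul_choose_le {r n : ℕ} (hr : r ≠ 0) {c x : ℝ} (hx : 0 ≤ x)
    (h : c * (n : ℝ) ^ (r - 1) ≤ r.factorial * x) : c / r * n.choose (r - 1) ≤ x := by
  rcases le_total c 0 with hc | hc
  · exact (mul_nonpos_of_nonpos_of_nonneg (div_nonpos_of_nonpos_of_nonneg hc r.cast_nonneg)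
      (Nat.cast_nonneg _)).trans hx
  · calc c / r * n.choose (r - 1)
        ≤ c / r * ((n : ℝ) ^ (r - 1) / (r - 1).factorial) := by
          gcongr
          exact Nat.choose_le_pow_div _ _
      _ = c * (n : ℝ) ^ (r - 1) / r.factorial := by
          rw [div_mul_div_comm, ← Nat.cast_mul, Nat.mul_factorial_pred hr]
      _ ≤ x := by
          rwa [div_le_iff₀' (by exact_mod_cast r.factorial_pos)]

lemma exists_addCommGroup_surjective {V Y Z : Type*} [AddCommGroup Y] [AddCommGroup Z]
    (e : V ≃ Z × Y) : ∃ (_ : AddCommGroup V) (π : V →+ Z), Function.Surjective π := by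
  let _ := e.addCommGroup
  exact ⟨inferInstance, (AddMonoidHom.fst Z Y).comp e.addEquiv.toAddMonoidHom,
    Prod.fst_surjective.comp e.surjective⟩

theorem stmt_12_general (r : ℕ) (hr : 3 ≤ r) (hr4 : r ≠ 4) (m d : ℕ) (hm : 0 < m) :
    ∃ H : Finset (Finset (Fin (m * 2 ^ d))),
      (∀ A ∈ H, #A = r) ∧ FrFree H (r + 1) 2 ∧ FrFree H (r + 2) 3 ∧
      ((1 / r : ℝ) - 2 ^ r / r / 2 ^ d) * ((m * 2 ^ d).choose (r - 1)) ≤ #H := by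
  have : NeZero m := ⟨hm.ne'⟩
  have e : Fin (m * 2 ^ d) ≃ (Fin d → ZMod 2) × ZMod m :=
    Fintype.equivOfCardEq (by simp [ZMod.card, mul_comm])
  obtain ⟨_, π, hπ⟩ := exists_addCommGroup_surjective e
  have hZ : ∀ z : Fin d → ZMod 2, z + z = 0 := fun z =>
    funext fun i => CharTwo.add_self_eq_zero (z i)
  have hcount := mul_card_pow_le_card_zeroSumGraph hZ hπ hr
  refine ⟨zeroSumGraph π r, fun A hA => (mem_zeroSumGraph.1 hA).1, frFree_two_zeroSumGraph,
    frFree_three_zeroSumGraph hZ hr4, ?_⟩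
  rw [div_right_comm, ← sub_div]
  exact div_mul_choose_le (by lia) (Nat.cast_nonneg _) (by simpa [ZMod.card] using hcount)

/-- For every integer `r > 4` there exists a constant `C > 0` such that for all positive
integers `m` and `d`, setting `n = m·2^d`, there exists an `r`-graph on `n` vertices
which is `F_r(r+1,2)`-free and `F_r(r+2,3)`-free and has at least
`(1/r − C/2^d)·C(n,r−1)` edges. -/
theorem stmt_12 (r : ℕ) (hr : 4 < r) :
    ∃ C : ℝ, 0 < C ∧ ∀ m d : ℕ, 0 < m → 0 < d →
      ∃ H : Finset (Finset (Fin (m * 2 ^ d))),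
        (∀ A ∈ H, A.card = r) ∧
        FrFree H (r + 1) 2 ∧ FrFree H (r + 2) 3 ∧
        ((1 / r : ℝ) - C / 2 ^ d) * ((m * 2 ^ d).choose (r - 1)) ≤ H.card :=
  ⟨2 ^ r / r, by positivity, fun m d hm _ => stmt_12_general r (by lia) (by lia) m d hm⟩
end
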